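/- Let N < D, let X ∈ ℝ^{N×D} have full rank N, and suppose β : [0,∞) → ℝ^D is a differentiable natural gradient flow trajectory under the logistic loss, i.e. F_X(β_t) β̇_t = −∇L_X(β_t) for all t ≥ 0. Then the logits s_t = X β_t follow an asymptotically linear trajectory with direction vector y: for every n = 1,…,N, (s_t)_n / t → y_n as t → ∞. -/

import Mathlib

open Matrix Set Filter

/-- The logistic sigmoid `φ(u) = 1/(1+exp(-u))`. -/
noncomputable def phi (u : ℝ) : ℝ := 1 / (1 + Real.exp (-u))

/-- Gradient of the logistic loss `L_X(β) = Σ_n log(1+exp(-y_n x_nᵀβ))` of a linear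
classifier `β`, namely `∇L_X(β) = -Σ_n y_n (1-φ(y_n x_nᵀβ)) x_n`. -/
noncomputable def gradL {N D : ℕ} (X : Matrix (Fin N) (Fin D) ℝ) (y : Fin N → ℝ)
    (β : Fin D → ℝ) : Fin D → ℝ :=
  fun d => -∑ n, y n * (1 - phi (y n * ∑ i, X n i * β i)) * X n d

/-- Training-sample Fisher information matrix
`F_X(β) = Xᵀ diag(φ(x_nᵀβ)(1-φ(x_nᵀβ))) X`. -/
noncomputable def fisher {N D : ℕ} (X : Matrix (Fin N) (Fin D) ℝ) (β : Fin D → ℝ) :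
    Matrix (Fin D) (Fin D) ℝ :=
  Xᵀ * Matrix.diagonal (fun n => phi ((X *ᵥ β) n) * (1 - phi ((X *ᵥ β) n))) * X

/-! If the feature vector `x_n` lies outside the span of the other ones, as it does for every `n`
when `X` has full row rank, then comparing its coefficients on the two sides of the flow equation
gives a scalar equation for the sample `n` alone. In terms of the margin `u = y_n (X β)_n` it reads
`φ(u) (1 - φ(u)) u' = 1 - φ(u)`, that is, `u' = 1 + exp (-u)`. Hence `exp u + 1` equals its own
derivative, so `exp (u t - t)` converges to `exp (u 0) + 1` and `u t - t` stays bounded. -/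

section LinearAlgebra

variable {m n K : Type*} [Fintype m]

lemma linearIndependent_row_of_rank_eq_card [Fintype n] [Field K] {M : Matrix m n K}
    (hM : M.rank = Fintype.card m) : LinearIndependent K M.row := by
  rw [linearIndependent_iff_card_eq_finrank_span, Set.finrank, ← M.rank_eq_finrank_span_row, hM]

lemma eq_zero_of_vecMul_eq_zero_of_notMem_span [DivisionRing K] {M : Matrix m n K} {v : m → K}
    (hv : v ᵥ* M = 0) {i : m} (hi : M.row i ∉ Submodule.span K (M.row '' {i}ᶜ)) : v i = 0 := by
  classical
  contrapose! hi
  have hsum : v i • M.row i = -∑ j ∈ {i}ᶜ, v j • M.row j := by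
    rw [eq_neg_iff_add_eq_zero, ← Fintype.sum_eq_add_sum_compl i fun j => v j • M.row j, ← hv,
      vecMul_eq_sum]
    rfl
  rw [← Submodule.smul_mem_iff _ hi, hsum]
  refine neg_mem (Submodule.sum_mem _ fun j hj => Submodule.smul_mem _ _ ?_)
  exact Submodule.subset_span (mem_image_of_mem _ (by simpa using hj))

lemma apply_eq_of_vecMul_eq_of_notMem_span [DivisionRing K] {M : Matrix m n K} {v w : m → K}
    (hvw : v ᵥ* M = w ᵥ* M) {i : m} (hi : M.row i ∉ Submodule.span K (M.row '' {i}ᶜ)) :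
    v i = w i :=
  sub_eq_zero.1 <| eq_zero_of_vecMul_eq_zero_of_notMem_span (v := v - w)
    (by rw [sub_vecMul, hvw, sub_self]) hi

end LinearAlgebra

section Calculus

lemma hasDerivWithinAt_const_dotProduct {n 𝕜 : Type*} [Fintype n] [NontriviallyNormedField 𝕜]
    (w : n → 𝕜) {f : 𝕜 → n → 𝕜} {f' : n → 𝕜} {s : Set 𝕜} {t : 𝕜}
    (hf : HasDerivWithinAt f f' s t) :
    HasDerivWithinAt (fun t => w ⬝ᵥ f t) (w ⬝ᵥ f') s t :=
  .fun_sum fun i _ => (hasDerivWithinAt_pi.1 hf i).const_mul (w i)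

lemma eq_exp_smul_of_hasDerivWithinAt_smul_self {E : Type*} [NormedAddCommGroup E]
    [NormedSpace ℝ E] {f : ℝ → E} {a c : ℝ}
    (hf : ∀ t ∈ Ici a, HasDerivWithinAt f (c • f t) (Ici a) t) {t : ℝ} (ht : t ∈ Ici a) :
    f t = Real.exp (c * (t - a)) • f a := by
  have hderiv : ∀ r ∈ Ici a,
      HasDerivWithinAt (fun r => Real.exp (-(c * (r - a))) • f r) 0 (Ici a) r := by
    intro r hr
    have hexp : HasDerivWithinAt (fun r => Real.exp (-(c * (r - a))))
        (Real.exp (-(c * (r - a))) * -c) (Ici a) r := by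
      simpa using ((((hasDerivWithinAt_id r (Ici a)).sub_const a).const_mul c).fun_neg).exp
    refine (hexp.fun_smul (hf r hr)).congr_deriv ?_
    module
  have hconst : Real.exp (-(c * (t - a))) • f t = f a := by
    simpa using constant_of_has_deriv_right_zero
      (fun r hr => (hderiv r hr.1).continuousWithinAt.mono Icc_subset_Ici_self)
      (fun r hr => (hderiv r hr.1).mono (Ici_subset_Ici.2 hr.1)) t ⟨ht, le_rfl⟩
  rw [← hconst, smul_smul, ← Real.exp_add, add_neg_cancel, Real.exp_zero, one_smul]

lemma tendsto_div_of_tendsto_sub_mul {𝕜 : Type*} [Field 𝕜] [LinearOrder 𝕜] [IsStrictOrderedRing 𝕜]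
    [TopologicalSpace 𝕜] [OrderTopology 𝕜] {f : 𝕜 → 𝕜} {c l : 𝕜}
    (hf : Tendsto (fun t => f t - c * t) atTop (nhds l)) :
    Tendsto (fun t => f t / t) atTop (nhds c) := by
  have hlim : Tendsto (fun t => (f t - c * t) / t + c) atTop (nhds c) := by
    simpa using (hf.div_atTop tendsto_id).add_const c
  refine hlim.congr' ?_
  filter_upwards [eventually_ne_atTop 0] with t ht
  field_simp
  ring

end Calculus

section MarginEquation

variable {u : ℝ → ℝ} {a : ℝ}

lemma exp_add_one_eq_of_hasDerivWithinAt_one_add_exp_neg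
    (hu : ∀ t ∈ Ici a, HasDerivWithinAt u (1 + Real.exp (-u t)) (Ici a) t) {t : ℝ}
    (ht : t ∈ Ici a) : Real.exp (u t) + 1 = Real.exp (t - a) * (Real.exp (u a) + 1) := by
  have hself : ∀ r ∈ Ici a, HasDerivWithinAt (fun r => Real.exp (u r) + 1)
      ((1 : ℝ) • (Real.exp (u r) + 1)) (Ici a) r := by
    intro r hr
    refine ((hu r hr).exp.add_const 1).congr_deriv ?_
    rw [one_smul, mul_add, mul_one, ← Real.exp_add, add_neg_cancel, Real.exp_zero]
  simpa using eq_exp_smul_of_hasDerivWithinAt_smul_self hself ht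

lemma tendsto_sub_of_hasDerivWithinAt_one_add_exp_neg
    (hu : ∀ t ∈ Ici a, HasDerivWithinAt u (1 + Real.exp (-u t)) (Ici a) t) :
    Tendsto (fun t => u t - (t - a)) atTop (nhds (Real.log (Real.exp (u a) + 1))) := by
  have hexp : Tendsto (fun t => Real.exp (u t - (t - a))) atTop (nhds (Real.exp (u a) + 1)) := by
    have hdecay : Tendsto (fun t => Real.exp (-(t - a))) atTop (nhds 0) :=
      Real.tendsto_exp_neg_atTop_nhds_zero.comp (tendsto_atTop_add_const_right _ _ tendsto_id)
    have hlim := (tendsto_const_nhds (x := Real.exp (u a) + 1)).sub hdecay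
    rw [sub_zero] at hlim
    refine hlim.congr' ?_
    filter_upwards [eventually_ge_atTop a] with t ht
    rw [Real.exp_sub, Real.exp_neg, eq_div_iff (Real.exp_ne_zero _), sub_mul,
      inv_mul_cancel₀ (Real.exp_ne_zero _)]
    linear_combination -exp_add_one_eq_of_hasDerivWithinAt_one_add_exp_neg hu ht
  simpa only [Real.log_exp] using hexp.log (by positivity)

end MarginEquation

section LogisticModel

lemma phi_eq_sigmoid : phi = Real.sigmoid := by
  ext u
  rw [phi, one_div, Real.sigmoid_def]

lemma mul_eq_one_add_exp_neg_of_sigmoid_mul {y s v : ℝ} (hy : y = 1 ∨ y = -1)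
    (h : Real.sigmoid s * (1 - Real.sigmoid s) * v = y * (1 - Real.sigmoid (y * s))) :
    y * v = 1 + Real.exp (-(y * s)) := by
  have heven : Real.sigmoid s * (1 - Real.sigmoid s) =
      Real.sigmoid (y * s) * (1 - Real.sigmoid (y * s)) := by
    rcases hy with rfl | rfl
    · rw [one_mul]
    · rw [neg_one_mul, Real.sigmoid_neg]
      ring
  have hcancel : Real.sigmoid (y * s) * v = y := by
    apply mul_left_cancel₀ (sub_pos.2 (Real.sigmoid_lt_one (y * s))).ne'
    linear_combination h - v * heven
  have hyy : y * y = 1 := mul_self_eq_one_iff.2 hy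
  calc y * v = (Real.sigmoid (y * s))⁻¹ := by
        apply eq_inv_of_mul_eq_one_right
        linear_combination y * hcancel + hyy
    _ = 1 + Real.exp (-(y * s)) := by rw [Real.sigmoid_def, inv_inv]

variable {N D : ℕ} (X : Matrix (Fin N) (Fin D) ℝ)

lemma fisher_mulVec (b v : Fin D → ℝ) :
    fisher X b *ᵥ v =
      (fun n => Real.sigmoid ((X *ᵥ b) n) * (1 - Real.sigmoid ((X *ᵥ b) n)) * (X *ᵥ v) n) ᵥ* X := by
  rw [fisher, phi_eq_sigmoid, ← mulVec_mulVec, ← mulVec_mulVec, mulVec_transpose]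
  congr 1
  ext n
  rw [mulVec_diagonal]

lemma neg_gradL (y : Fin N → ℝ) (b : Fin D → ℝ) :
    -gradL X y b = (fun n => y n * (1 - Real.sigmoid (y n * (X *ᵥ b) n))) ᵥ* X := by
  ext d
  simp [gradL, phi_eq_sigmoid, vecMul, mulVec, dotProduct]

variable {X}

lemma margin_velocity_eq_one_add_exp_neg {y : Fin N → ℝ} {b v : Fin D → ℝ}
    (hflow : fisher X b *ᵥ v = -gradL X y b) {n : Fin N} (hy : y n = 1 ∨ y n = -1)
    (hn : X.row n ∉ Submodule.span ℝ (X.row '' {n}ᶜ)) :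
    y n * (X *ᵥ v) n = 1 + Real.exp (-(y n * (X *ᵥ b) n)) := by
  rw [fisher_mulVec, neg_gradL] at hflow
  exact mul_eq_one_add_exp_neg_of_sigmoid_mul hy (apply_eq_of_vecMul_eq_of_notMem_span hflow hn)

end LogisticModel

theorem ngf_logits_asymptotically_linear_general {N D : ℕ} (X : Matrix (Fin N) (Fin D) ℝ)
    (y : Fin N → ℝ) (β dβ : ℝ → Fin D → ℝ)
    (hβdiff : ∀ t ∈ Ici (0 : ℝ), HasDerivWithinAt β (dβ t) (Ici 0) t)
    (hflow : ∀ t ∈ Ici (0 : ℝ), fisher X (β t) *ᵥ dβ t = -gradL X y (β t))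
    (n : Fin N) (hy : y n = 1 ∨ y n = -1)
    (hn : X.row n ∉ Submodule.span ℝ (X.row '' {n}ᶜ)) :
    Tendsto (fun t => (X *ᵥ β t) n / t) atTop (nhds (y n)) := by
  have hmargin : ∀ t ∈ Ici (0 : ℝ), HasDerivWithinAt (fun t => y n * (X *ᵥ β t) n)
      (1 + Real.exp (-(y n * (X *ᵥ β t) n))) (Ici 0) t := by
    intro t ht
    rw [← margin_velocity_eq_one_add_exp_neg (hflow t ht) hy hn]
    exact (hasDerivWithinAt_const_dotProduct (X n) (hβdiff t ht)).const_mul (y n)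
  have hlim := (tendsto_sub_of_hasDerivWithinAt_one_add_exp_neg hmargin).const_mul (y n)
  refine tendsto_div_of_tendsto_sub_mul (hlim.congr fun t => ?_)
  have hyy : y n * y n = 1 := mul_self_eq_one_iff.2 hy
  linear_combination (X *ᵥ β t) n * hyy

/-- **Theorem 3**: with `N < D` and `X` of full rank `N`, the logits `s_t = X β_t` of a
natural gradient flow trajectory under the logistic loss grow asymptotically linearly
with direction vector `y`. -/
theorem ngf_logits_asymptotically_linear {N D : ℕ} (hND : N < D)
    (X : Matrix (Fin N) (Fin D) ℝ) (hX : X.rank = N)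
    (y : Fin N → ℝ) (hy : ∀ n, y n = 1 ∨ y n = -1)
    (β dβ : ℝ → Fin D → ℝ)
    (hβdiff : ∀ t ∈ Ici (0:ℝ), HasDerivWithinAt β (dβ t) (Ici 0) t)
    (hflow : ∀ t ∈ Ici (0:ℝ), fisher X (β t) *ᵥ dβ t = -gradL X y (β t)) :
    ∀ n, Tendsto (fun t => (X *ᵥ β t) n / t) atTop (nhds (y n)) := by
  intro n
  have hrows : LinearIndependent ℝ X.row :=
    linearIndependent_row_of_rank_eq_card (by simpa using hX)
  exact ngf_logits_asymptotically_linear_general X y β dβ hβdiff hflow n (hy n)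
    (hrows.notMem_span n)
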